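/- arXiv:2110.15940 — 2 statements merged into one kernel-verified Lean document; each statement's English description precedes it below -/
import Mathlib

section
/- Let k, N be natural numbers with 1 ≤ k < N, n := N − k, and assume kn ≥ 4. Then in Λ(V): (tr Φ)^{kn−4} ∧ ((tr Φ)² − tr(Φ²))² = (kn−4)! · n · (n+1) · k · (k−1) · [k(k−1)n(n−1) + 2(k−2)(k−3)n + 4(k−2)(n−1)] · T. (Equivalently, with τ₂ := ½((tr Φ)² − tr(Φ²)), this states ∫_{G(k,N)} (σ₁^∨)^{kN−k²−4} (σ_{1,1}^∨)² = ¼ (kN−k²−4)! (N−k)(N−k+1) k(k−1) [k(k−1)(N−k)(N−k−1) + 2(k−2)(k−3)(N−k) + 4(k−2)(N−k−1)] · (∏_{j=0}^{k−1} j!)/(∏_{j=N−k}^{N−1} j!).) -/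
/-!
Write `e = tr Φ`. The derivation of `Λ(V)` extending an endomorphism `f` of `V` acts on top-degree
forms as multiplication by the trace of `f`. Let `D_ij` be the derivation with `ψ̄_s^i ↦ ψ̄_s^j` for
all `s`, which kills the other generators. Its trace is `n δ_ij` and `D_ij e = ω^{ij}`, so applying
it to a top form `e^{r+1} Y` is an integration by parts:
`(r + 1) e^r ω^{ij} Y = e^{r+1} (n δ_ij Y - D_ij Y)`.
With `Y = (Φ^{m+1})_{ji} y`, summed over `i` and `j`, this becomes a loop equation that trades
`tr Φ^{m+2}` for `e` and traces of lower powers. Three instances of it reduce `e^r (tr Φ²)²`,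
`e^{r+1} tr Φ³` and `e^{r+2} tr Φ²`, where `r = kn - 4`, to multiples of `e^{kn}`. Finally
`e^{kn} = (kn)! T`, because `e` is the sum of `kn` commuting elements of square zero whose product
is `T`.
-/

noncomputable section

/-- The real vector space with basis `ψ_s^j` (inl) and `ψ̄_s^j` (inr),
    `1 ≤ s ≤ n`, `1 ≤ j ≤ k`. -/
abbrev V (k n : ℕ) : Type := ((Fin n × Fin k) ⊕ (Fin n × Fin k)) → ℝ

/-- The fermionic variable `ψ_s^j` as a degree-1 element of the exterior algebra. -/
def ψ (k n : ℕ) (s : Fin n) (j : Fin k) : ExteriorAlgebra ℝ (V k n) :=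
  ExteriorAlgebra.ι ℝ (Pi.single (Sum.inl (s, j)) (1 : ℝ))

/-- The fermionic variable `ψ̄_s^j` as a degree-1 element of the exterior algebra. -/
def ψb (k n : ℕ) (s : Fin n) (j : Fin k) : ExteriorAlgebra ℝ (V k n) :=
  ExteriorAlgebra.ι ℝ (Pi.single (Sum.inr (s, j)) (1 : ℝ))

/-- `ω^{ij} = ∑_{s=1}^n ψ_s^i ∧ ψ̄_s^j`. -/
def ω (k n : ℕ) (i j : Fin k) : ExteriorAlgebra ℝ (V k n) :=
  ∑ s : Fin n, ψ k n s i * ψb k n s j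

/-- `tr Φ = ∑_{i=1}^k ω^{ii}`. -/
def trPhi (k n : ℕ) : ExteriorAlgebra ℝ (V k n) :=
  ∑ i : Fin k, ω k n i i

/-- `tr(Φ²) = ∑_{i,j=1}^k ω^{ij} ∧ ω^{ji}`. -/
def trPhi2 (k n : ℕ) : ExteriorAlgebra ℝ (V k n) :=
  ∑ i : Fin k, ∑ j : Fin k, ω k n i j * ω k n j i

/-- The top-degree generator `T = ∧_{s=1}^n (ψ_s^1 ∧ ψ̄_s^1 ∧ ⋯ ∧ ψ_s^k ∧ ψ̄_s^k)`. -/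
def T (k n : ℕ) : ExteriorAlgebra ℝ (V k n) :=
  ((List.finRange n).map (fun s =>
    ((List.finRange k).map (fun j => ψ k n s j * ψb k n s j)).prod)).prod

section SquareZero

variable {A : Type*} [Semiring A]

theorem add_pow_succ_of_mul_self_eq_zero {a b : A} (h : Commute a b) (ha : a * a = 0) (m : ℕ) :
    (a + b) ^ (m + 1) = b ^ (m + 1) + (m + 1) • (a * b ^ m) := by
  induction m with
  | zero => simp [add_comm]
  | succ m ih =>
    have hab : a * b ^ (m + 1) = b * (a * b ^ m) := by
      rw [pow_succ', ← mul_assoc, ← mul_assoc, h.eq]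
    have haa : a * (a * b ^ m) = 0 := by rw [← mul_assoc, ha, zero_mul]
    rw [pow_succ' _ (m + 1), ih, add_mul, mul_add, mul_add, mul_smul_comm, mul_smul_comm, haa,
      smul_zero, add_zero, ← hab, ← pow_succ', succ_nsmul _ (m + 1)]
    abel

theorem list_sum_pow_succ_length_eq_zero {l : List A} (hcomm : l.Pairwise Commute)
    (hsq : ∀ a ∈ l, a * a = 0) : l.sum ^ (l.length + 1) = 0 := by
  induction l with
  | nil => simp
  | cons a l ih =>
    rw [List.pairwise_cons] at hcomm
    rw [List.forall_mem_cons] at hsq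
    have hl := ih hcomm.2 hsq.2
    rw [List.sum_cons, List.length_cons,
      add_pow_succ_of_mul_self_eq_zero (Commute.list_sum_right _ _ hcomm.1) hsq.1, pow_succ, hl]
    simp

theorem list_sum_pow_length {l : List A} (hcomm : l.Pairwise Commute)
    (hsq : ∀ a ∈ l, a * a = 0) : l.sum ^ l.length = l.length.factorial • l.prod := by
  induction l with
  | nil => simp
  | cons a l ih =>
    rw [List.pairwise_cons] at hcomm
    rw [List.forall_mem_cons] at hsq
    rw [List.sum_cons, List.length_cons, List.prod_cons,
      add_pow_succ_of_mul_self_eq_zero (Commute.list_sum_right _ _ hcomm.1) hsq.1,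
      list_sum_pow_succ_length_eq_zero hcomm.2 hsq.2, ih hcomm.2 hsq.2, zero_add, mul_smul_comm,
      smul_smul, Nat.factorial_succ]

end SquareZero

theorem matrix_pow_apply_mem_graded {n ι A σ : Type*} [Fintype n] [DecidableEq n] [AddMonoid ι]
    [Semiring A] [SetLike σ A] [AddSubmonoidClass σ A] (𝒜 : ι → σ) [SetLike.GradedMonoid 𝒜]
    {M : Matrix n n A} {d : ι} (hM : ∀ i j, M i j ∈ 𝒜 d) (m : ℕ) (i j : n) :
    (M ^ m) i j ∈ 𝒜 (m • d) := by
  induction m generalizing j with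
  | zero =>
    rw [pow_zero, zero_nsmul, Matrix.one_apply]
    split_ifs
    exacts [SetLike.one_mem_graded 𝒜, zero_mem _]
  | succ m ih =>
    rw [pow_succ, succ_nsmul, Matrix.mul_apply]
    exact sum_mem fun l _ => SetLike.mul_mem_graded (ih l) (hM l j)

section Exterior

open ExteriorAlgebra

variable {R M : Type*} [CommRing R] [AddCommGroup M] [Module R M]

theorem ι_mul_ι_eq_neg_swap (u v : M) : ι R u * ι R v = -(ι R v * ι R u) :=
  eq_neg_of_add_eq_zero_left (ι_add_mul_swap u v)

theorem ι_mul_ι_mem_center (u v : M) :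
    ι R u * ι R v ∈ Subalgebra.center R (ExteriorAlgebra R M) := by
  rw [Subalgebra.mem_center_iff]
  intro x
  induction x using CliffordAlgebra.left_induction with
  | algebraMap r => exact Algebra.commutes r _
  | add x y hx hy => rw [add_mul, mul_add, hx, hy]
  | ι_mul x w hx =>
    have hw : ι R w * (ι R u * ι R v) = ι R u * ι R v * ι R w := by
      rw [← mul_assoc, ι_mul_ι_eq_neg_swap w u, neg_mul, mul_assoc, ι_mul_ι_eq_neg_swap w v,
        mul_neg, neg_neg, mul_assoc]
    rw [mul_assoc, hx, ← mul_assoc, hw, mul_assoc]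

theorem ι_mul_ι_mul_self (u v : M) : ι R u * ι R v * (ι R u * ι R v) = 0 := by
  rw [← mul_assoc, ← Subalgebra.mem_center_iff.mp (ι_mul_ι_mem_center u v) (ι R u), ← mul_assoc,
    ι_sq_zero, zero_mul, zero_mul]

theorem ι_mem_exteriorPower_one (v : M) : ι R v ∈ ⋀[R]^1 M := by
  rw [exteriorPower, pow_one]
  exact LinearMap.mem_range_self _ v

theorem mul_mem_exteriorPower {c d : ℕ} {x y : ExteriorAlgebra R M} (hx : x ∈ ⋀[R]^c M)
    (hy : y ∈ ⋀[R]^d M) : x * y ∈ ⋀[R]^(c + d) M :=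
  SetLike.mul_mem_graded (A := fun d : ℕ => ⋀[R]^d M) hx hy

theorem eq_zero_of_mem_exteriorPower [Nontrivial R] [Module.Free R M] [Module.Finite R M] {d : ℕ}
    (hd : Module.finrank R M < d) {x : ExteriorAlgebra R M} (hx : x ∈ ⋀[R]^d M) : x = 0 := by
  have h : Module.finrank R (⋀[R]^d M) = 0 := by
    rw [exteriorPower.finrank_eq, Nat.choose_eq_zero_of_lt hd]
  have := (Module.finrank_eq_zero_iff_of_free R _).mp h
  exact congrArg Subtype.val (Subsingleton.elim (⟨x, hx⟩ : ⋀[R]^d M) 0)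

variable {B : Type*} [Fintype B] (b : Module.Basis B R M)

/-- The derivation of the exterior algebra extending an endomorphism `f` of a finite free module:
in coordinates, the vector field `∑ f(bᵢ) ∂/∂bᵢ`. -/
def exteriorDerivation (f : M →ₗ[R] M) : ExteriorAlgebra R M →ₗ[R] ExteriorAlgebra R M :=
  ∑ i, LinearMap.mulLeft R (ι R (f (b i))) ∘ₗ
    CliffordAlgebra.contractLeft (Q := (0 : QuadraticForm R M)) (b.coord i)

variable (f : M →ₗ[R] M)

theorem exteriorDerivation_apply (x : ExteriorAlgebra R M) :
    exteriorDerivation b f x = ∑ i, ι R (f (b i)) *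
      CliffordAlgebra.contractLeft (Q := (0 : QuadraticForm R M)) (b.coord i) x := by
  simp [exteriorDerivation]

theorem exteriorDerivation_algebraMap (r : R) :
    exteriorDerivation b f (algebraMap R (ExteriorAlgebra R M) r) = 0 := by
  simp [exteriorDerivation_apply]

theorem exteriorDerivation_one : exteriorDerivation b f 1 = 0 := by
  simpa using exteriorDerivation_algebraMap b f 1

theorem exteriorDerivation_ι_mul (v : M) (x : ExteriorAlgebra R M) :
    exteriorDerivation b f (ι R v * x) = ι R (f v) * x + ι R v * exteriorDerivation b f x := by
  have hterm (i : B) : ι R (f (b i)) *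
      CliffordAlgebra.contractLeft (Q := (0 : QuadraticForm R M)) (b.coord i) (ι R v * x) =
        ι R (f (b.coord i v • b i)) * x + ι R v * (ι R (f (b i)) *
          CliffordAlgebra.contractLeft (Q := (0 : QuadraticForm R M)) (b.coord i) x) := by
    rw [CliffordAlgebra.contractLeft_ι_mul, mul_sub, mul_smul_comm, map_smul, map_smul,
      smul_mul_assoc, ← mul_assoc, ← mul_assoc, ι_mul_ι_eq_neg_swap, neg_mul, sub_neg_eq_add]
  have hv : ∑ i, b.coord i v • b i = v := b.sum_repr v
  simp only [exteriorDerivation_apply, hterm, Finset.sum_add_distrib]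
  rw [← Finset.sum_mul, ← map_sum, ← map_sum, hv, ← Finset.mul_sum]

theorem exteriorDerivation_ι (v : M) : exteriorDerivation b f (ι R v) = ι R (f v) := by
  simpa [exteriorDerivation_one] using exteriorDerivation_ι_mul b f v 1

theorem exteriorDerivation_mul (x y : ExteriorAlgebra R M) :
    exteriorDerivation b f (x * y) =
      exteriorDerivation b f x * y + x * exteriorDerivation b f y := by
  induction x using CliffordAlgebra.left_induction with
  | algebraMap r => simp [exteriorDerivation_algebraMap, ← Algebra.smul_def]
  | add x₁ x₂ h₁ h₂ =>
    rw [add_mul, map_add, map_add, h₁, h₂]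
    noncomm_ring
  | ι_mul x v hx =>
    rw [mul_assoc, exteriorDerivation_ι_mul, exteriorDerivation_ι_mul, hx]
    noncomm_ring

theorem exteriorDerivation_pow_succ {x : ExteriorAlgebra R M}
    (hx : x ∈ Subalgebra.center R (ExteriorAlgebra R M)) (m : ℕ) :
    exteriorDerivation b f (x ^ (m + 1)) = (m + 1) • (x ^ m * exteriorDerivation b f x) := by
  induction m with
  | zero => simp
  | succ m ih =>
    rw [pow_succ, exteriorDerivation_mul, ih, smul_mul_assoc, mul_assoc,
      Subalgebra.mem_center_iff.mp hx, ← mul_assoc, ← pow_succ, succ_nsmul _ (m + 1)]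

-- Contracting the vanishing form `f(bᵢ) ∧ x` with the dual basis vector `bᵢ*` shows that the
-- `i`-th term of the derivation is the `i`-th diagonal entry of `f` times `x`.
theorem exteriorDerivation_eq_trace_smul [Nontrivial R] {d : ℕ} (hd : Module.finrank R M ≤ d)
    {x : ExteriorAlgebra R M} (hx : x ∈ ⋀[R]^d M) :
    exteriorDerivation b f x = LinearMap.trace R M f • x := by
  classical
  have := Module.Free.of_basis b
  have := Module.Finite.of_basis b
  have hwedge (v : M) : ι R v * x = 0 :=
    eq_zero_of_mem_exteriorPower (d := 1 + d) (by omega)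
      (mul_mem_exteriorPower (ι_mem_exteriorPower_one v) hx)
  have hterm (i : B) : ι R (f (b i)) *
      CliffordAlgebra.contractLeft (Q := (0 : QuadraticForm R M)) (b.coord i) x =
        b.coord i (f (b i)) • x := by
    have h := CliffordAlgebra.contractLeft_ι_mul (Q := (0 : QuadraticForm R M))
      (b.coord i) (f (b i)) x
    rw [hwedge, map_zero] at h
    exact (sub_eq_zero.mp h.symm).symm
  rw [exteriorDerivation_apply, Finset.sum_congr rfl fun i _ => hterm i, ← Finset.sum_smul,
    LinearMap.trace_eq_matrix_trace R b f]
  simp [Matrix.trace, LinearMap.toMatrix_apply]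

end Exterior

section Fermions

open Finset

variable (k n : ℕ)

/-- The matrix `Φ = (ω^{ij})`; `trPhi` and `trPhi2` are the traces of `Φ` and `Φ²`. -/
def Φ : Matrix (Fin k) (Fin k) (ExteriorAlgebra ℝ (V k n)) :=
  Matrix.of (ω k n)

theorem trPhi_eq_trace : trPhi k n = (Φ k n).trace := rfl

theorem trPhi2_eq_trace_sq : trPhi2 k n = (Φ k n ^ 2).trace := by
  rw [sq]
  rfl

/-- The elementary matrix of `𝔤𝔩ₖ` acting on the barred variables only: it sends `ψ̄_s^i` to
`ψ̄_s^j` for every `s`, and all other basis vectors to zero. -/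
def barMatrixUnit (i j : Fin k) : V k n →ₗ[ℝ] V k n :=
  ∑ s : Fin n, (LinearMap.proj (Sum.inr (s, i))).smulRight (Pi.single (Sum.inr (s, j)) 1)

theorem trace_barMatrixUnit (i j : Fin k) :
    LinearMap.trace ℝ (V k n) (barMatrixUnit k n i j) = if i = j then (n : ℝ) else 0 := by
  simp [barMatrixUnit, map_sum, LinearMap.trace_smulRight, Pi.single_apply]

/-- The derivation of `Λ(V)` extending `barMatrixUnit`, that is `∑ₛ ψ̄_s^j ∂/∂ψ̄_s^i`. -/
def barDerivation (i j : Fin k) : ExteriorAlgebra ℝ (V k n) →ₗ[ℝ] ExteriorAlgebra ℝ (V k n) :=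
  exteriorDerivation (Pi.basisFun ℝ _) (barMatrixUnit k n i j)

theorem barDerivation_mul (i j : Fin k) (x y : ExteriorAlgebra ℝ (V k n)) :
    barDerivation k n i j (x * y) = barDerivation k n i j x * y + x * barDerivation k n i j y :=
  exteriorDerivation_mul _ _ x y

theorem barDerivation_one (i j : Fin k) : barDerivation k n i j 1 = 0 :=
  exteriorDerivation_one _ _

theorem barDerivation_ψ (i j a : Fin k) (s : Fin n) : barDerivation k n i j (ψ k n s a) = 0 := by
  simp [barDerivation, ψ, exteriorDerivation_ι, barMatrixUnit]

theorem barDerivation_ψb (i j a : Fin k) (s : Fin n) :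
    barDerivation k n i j (ψb k n s a) = if i = a then ψb k n s j else 0 := by
  rw [barDerivation, ψb, exteriorDerivation_ι]
  split_ifs with h <;> simp [barMatrixUnit, ψb, Pi.single_apply, h, ite_smul]

theorem barDerivation_Φ_apply (i j a b : Fin k) :
    barDerivation k n i j (Φ k n a b) = if i = b then Φ k n a j else 0 := by
  simp only [Φ, Matrix.of_apply, ω, map_sum, barDerivation_mul, barDerivation_ψ, barDerivation_ψb,
    zero_mul, zero_add]
  split_ifs <;> simp

theorem barDerivation_Φ_pow_succ_apply (m : ℕ) (i j a b : Fin k) :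
    barDerivation k n i j ((Φ k n ^ (m + 1)) a b) =
      ∑ p ∈ antidiagonal m, (Φ k n ^ (p.1 + 1)) a j * (Φ k n ^ p.2) i b := by
  induction m generalizing b with
  | zero => simp [barDerivation_Φ_apply, Matrix.one_apply]
  | succ m ih =>
    rw [pow_succ, Matrix.mul_apply, map_sum, Nat.sum_antidiagonal_succ']
    simp only [barDerivation_mul, ih, barDerivation_Φ_apply, sum_add_distrib, sum_mul]
    rw [sum_comm, add_comm]
    congr 1
    · simp [pow_succ _ (m + 1), Matrix.mul_apply, Matrix.one_apply]
    · simp [pow_succ, Matrix.mul_apply, mul_sum, mul_assoc]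

theorem ω_mem_center (i j : Fin k) :
    ω k n i j ∈ Subalgebra.center ℝ (ExteriorAlgebra ℝ (V k n)) :=
  sum_mem fun _ _ => ι_mul_ι_mem_center _ _

theorem Φ_pow_apply_mem_center (m : ℕ) (i j : Fin k) :
    (Φ k n ^ m) i j ∈ Subalgebra.center ℝ (ExteriorAlgebra ℝ (V k n)) := by
  have hΦ : Φ k n ∈ (Subalgebra.center ℝ (ExteriorAlgebra ℝ (V k n))).matrix := ω_mem_center k n
  exact pow_mem hΦ m i j

theorem trace_Φ_pow_mem_center (m : ℕ) :
    (Φ k n ^ m).trace ∈ Subalgebra.center ℝ (ExteriorAlgebra ℝ (V k n)) :=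
  sum_mem fun i _ => Φ_pow_apply_mem_center k n m i i

theorem trPhi_mem_center : trPhi k n ∈ Subalgebra.center ℝ (ExteriorAlgebra ℝ (V k n)) := by
  simpa [trPhi_eq_trace] using trace_Φ_pow_mem_center k n 1

theorem ω_mem_exteriorPower (i j : Fin k) : ω k n i j ∈ ⋀[ℝ]^2 (V k n) :=
  sum_mem fun _ _ =>
    mul_mem_exteriorPower (ι_mem_exteriorPower_one _) (ι_mem_exteriorPower_one _)

theorem Φ_pow_apply_mem_exteriorPower (m : ℕ) (i j : Fin k) :
    (Φ k n ^ m) i j ∈ ⋀[ℝ]^(2 * m) (V k n) := by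
  rw [mul_comm, ← smul_eq_mul]
  exact matrix_pow_apply_mem_graded (fun d => ⋀[ℝ]^d (V k n)) (ω_mem_exteriorPower k n) m i j

theorem trace_Φ_pow_mem_exteriorPower (m : ℕ) :
    (Φ k n ^ m).trace ∈ ⋀[ℝ]^(2 * m) (V k n) :=
  sum_mem fun i _ => Φ_pow_apply_mem_exteriorPower k n m i i

theorem trPhi_pow_mem_exteriorPower (m : ℕ) : trPhi k n ^ m ∈ ⋀[ℝ]^(2 * m) (V k n) := by
  have h : trPhi k n ∈ ⋀[ℝ]^2 (V k n) := sum_mem fun i _ => ω_mem_exteriorPower k n i i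
  rw [mul_comm, ← smul_eq_mul]
  exact SetLike.pow_mem_graded (A := fun d => ⋀[ℝ]^d (V k n)) m h

theorem barDerivation_trace_Φ_pow_succ (m : ℕ) (i j : Fin k) :
    barDerivation k n i j (Φ k n ^ (m + 1)).trace = (m + 1) • (Φ k n ^ (m + 1)) i j := by
  have hp (p : ℕ × ℕ) (hp : p ∈ antidiagonal m) :
      ∑ a, (Φ k n ^ (p.1 + 1)) a j * (Φ k n ^ p.2) i a = (Φ k n ^ (m + 1)) i j := by
    calc
      _ = ∑ a, (Φ k n ^ p.2) i a * (Φ k n ^ (p.1 + 1)) a j :=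
        sum_congr rfl fun a _ => Subalgebra.mem_center_iff.mp (Φ_pow_apply_mem_center k n _ i a) _
      _ = (Φ k n ^ (p.2 + (p.1 + 1))) i j := by rw [pow_add _ p.2 (p.1 + 1), Matrix.mul_apply]
      _ = (Φ k n ^ (m + 1)) i j := by rw [← mem_antidiagonal.mp hp, ← add_assoc, add_comm p.2]
  simp only [Matrix.trace, Matrix.diag, map_sum, barDerivation_Φ_pow_succ_apply]
  rw [sum_comm, sum_congr rfl hp, sum_const, Nat.card_antidiagonal]

theorem sum_Φ_pow_apply_mul_barDerivation_trace (l m : ℕ) :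
    ∑ i, ∑ j, (Φ k n ^ l) j i * barDerivation k n i j (Φ k n ^ (m + 1)).trace =
      (m + 1) • (Φ k n ^ (l + (m + 1))).trace := by
  simp only [barDerivation_trace_Φ_pow_succ, mul_smul_comm]
  rw [pow_add _ l (m + 1), sum_comm]
  simp only [Matrix.trace, Matrix.diag, Matrix.mul_apply, smul_sum]

theorem sum_barDerivation_Φ_pow_succ_apply_swap (m : ℕ) :
    ∑ i, ∑ j, barDerivation k n i j ((Φ k n ^ (m + 1)) j i) =
      ∑ p ∈ antidiagonal m, (Φ k n ^ (p.1 + 1)).trace * (Φ k n ^ p.2).trace := by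
  simp only [barDerivation_Φ_pow_succ_apply, Matrix.trace, Matrix.diag, sum_mul_sum]
  rw [sum_comm]
  simp only [sum_comm (s := antidiagonal m)]

variable {k n}

theorem trPhi_pow_mul_Φ_apply_mul {r d : ℕ} (hd : 2 * (k * n) ≤ 2 * (r + 1) + d)
    {y : ExteriorAlgebra ℝ (V k n)} (hy : y ∈ ⋀[ℝ]^d (V k n)) (i j : Fin k) :
    (r + 1) • (trPhi k n ^ r * (Φ k n i j * y)) =
      trPhi k n ^ (r + 1) * ((if i = j then (n : ℝ) else 0) • y - barDerivation k n i j y) := by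
  have htop : trPhi k n ^ (r + 1) * y ∈ ⋀[ℝ]^(2 * (r + 1) + d) (V k n) :=
    mul_mem_exteriorPower (trPhi_pow_mem_exteriorPower k n (r + 1)) hy
  have htrace := exteriorDerivation_eq_trace_smul (Pi.basisFun ℝ _) (barMatrixUnit k n i j)
    (by simp; lia) htop
  have htrPhi : barDerivation k n i j (trPhi k n) = Φ k n i j := by
    simpa [trPhi_eq_trace] using barDerivation_trace_Φ_pow_succ k n 0 i j
  rw [trace_barMatrixUnit, ← barDerivation, barDerivation_mul, barDerivation,
    exteriorDerivation_pow_succ _ _ (trPhi_mem_center k n), ← barDerivation, htrPhi,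
    smul_mul_assoc, mul_assoc, ← eq_sub_iff_add_eq] at htrace
  rw [htrace, mul_sub, mul_smul_comm]

theorem trPhi_pow_mul_trace_Φ_pow_mul {r d m : ℕ}
    (hd : 2 * (k * n) ≤ 2 * (r + 1) + (2 * (m + 1) + d))
    {y : ExteriorAlgebra ℝ (V k n)} (hy : y ∈ ⋀[ℝ]^d (V k n)) :
    (r + 1) • (trPhi k n ^ r * ((Φ k n ^ (m + 2)).trace * y)) =
      trPhi k n ^ (r + 1) * ((n : ℝ) • ((Φ k n ^ (m + 1)).trace * y) -
        (∑ p ∈ antidiagonal m, (Φ k n ^ (p.1 + 1)).trace * (Φ k n ^ p.2).trace) * y -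
        ∑ i, ∑ j, (Φ k n ^ (m + 1)) j i * barDerivation k n i j y) := by
  have hentry (i j : Fin k) := trPhi_pow_mul_Φ_apply_mul hd
    (mul_mem_exteriorPower (Φ_pow_apply_mem_exteriorPower k n (m + 1) j i) hy) i j
  have hdiag : ∑ i : Fin k, ∑ j : Fin k,
      (if i = j then (n : ℝ) else 0) • ((Φ k n ^ (m + 1)) j i * y) =
        (n : ℝ) • ((Φ k n ^ (m + 1)).trace * y) := by
    simp [Matrix.trace, sum_mul, smul_sum]
  have htrace : (Φ k n ^ (m + 2)).trace * y =
      ∑ i, ∑ j, Φ k n i j * ((Φ k n ^ (m + 1)) j i * y) := by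
    simp only [pow_succ' _ (m + 1), Matrix.trace, Matrix.diag, Matrix.mul_apply, sum_mul, mul_assoc]
  rw [htrace, ← sum_barDerivation_Φ_pow_succ_apply_swap, ← hdiag]
  simp only [mul_sum, smul_sum, hentry]
  simp only [barDerivation_mul, mul_sub, mul_add, sum_sub_distrib, sum_add_distrib, mul_sum,
    sum_mul, sub_sub]

theorem trPhi_pow_mul_trPhi2 {r : ℕ} (hr : k * n ≤ r + 2) :
    (r + 1) • (trPhi k n ^ r * trPhi2 k n) = ((n : ℝ) - k) • trPhi k n ^ (r + 2) := by
  have h := trPhi_pow_mul_trace_Φ_pow_mul (k := k) (n := n) (r := r) (m := 0) (d := 0)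
    (y := 1) (by lia) (SetLike.one_mem_graded fun d => ⋀[ℝ]^d (V k n))
  simp only [mul_one, barDerivation_one, mul_zero, sum_const_zero, sub_zero, zero_add, pow_one,
    Nat.antidiagonal_zero, sum_singleton, pow_zero, Matrix.trace_one, Fintype.card_fin,
    ← trPhi_eq_trace, ← trPhi2_eq_trace_sq] at h
  rw [h, pow_succ _ (r + 1), ← nsmul_eq_mul', ← Nat.cast_smul_eq_nsmul ℝ, ← sub_smul,
    mul_smul_comm]

theorem trPhi_pow_mul_trPhi2_sq {r : ℕ} (hr : k * n ≤ r + 4) :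
    (r + 1) • (trPhi k n ^ r * trPhi2 k n ^ 2) =
      ((n : ℝ) - k) • (trPhi k n ^ (r + 2) * trPhi2 k n) -
        (2 : ℝ) • (trPhi k n ^ (r + 1) * (Φ k n ^ 3).trace) := by
  have h := trPhi_pow_mul_trace_Φ_pow_mul (k := k) (n := n) (r := r) (m := 0) (d := 4)
    (y := (Φ k n ^ 2).trace) (by lia) (trace_Φ_pow_mem_exteriorPower k n 2)
  rw [sum_Φ_pow_apply_mul_barDerivation_trace k n (0 + 1) 1] at h
  simp only [zero_add, pow_one, Nat.antidiagonal_zero, sum_singleton, pow_zero, Matrix.trace_one,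
    Fintype.card_fin, Nat.reduceAdd, ← trPhi_eq_trace, ← trPhi2_eq_trace_sq] at h
  rw [sq, h, ← nsmul_eq_mul', ← Nat.cast_smul_eq_nsmul ℝ k, smul_mul_assoc, ← sub_smul, mul_sub,
    mul_smul_comm, mul_smul_comm, ← mul_assoc, ← pow_succ, two_smul, two_smul]

theorem trPhi_pow_mul_trace_Φ_cube {r : ℕ} (hr : k * n ≤ r + 3) :
    (r + 1) • (trPhi k n ^ r * (Φ k n ^ 3).trace) =
      ((n : ℝ) - k) • (trPhi k n ^ (r + 1) * trPhi2 k n) - trPhi k n ^ (r + 3) := by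
  have h := trPhi_pow_mul_trace_Φ_pow_mul (k := k) (n := n) (r := r) (m := 1) (d := 0)
    (y := 1) (by lia) (SetLike.one_mem_graded fun d => ⋀[ℝ]^d (V k n))
  simp only [mul_one, barDerivation_one, mul_zero, sum_const_zero, sub_zero, zero_add, pow_one,
    Nat.sum_antidiagonal_succ, Nat.antidiagonal_zero, sum_singleton, pow_zero, Matrix.trace_one,
    Fintype.card_fin, Nat.reduceAdd, ← trPhi_eq_trace, ← trPhi2_eq_trace_sq] at h
  rw [h, ← nsmul_eq_mul', ← Nat.cast_smul_eq_nsmul ℝ k, sub_add_eq_sub_sub_swap, ← sub_smul,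
    mul_sub, mul_smul_comm, ← sq, ← pow_add]

theorem trPhi_pow_mul_sub_trPhi2_sq {r : ℕ} (hr : k * n ≤ r + 4) :
    (((r : ℝ) + 1) * (r + 2) * (r + 3)) • (trPhi k n ^ r * (trPhi k n ^ 2 - trPhi2 k n) ^ 2) =
      (((r : ℝ) + 1) * (r + 2) * (r + 3) - 2 * (r + 1) * (r + 2) * (n - k) + r * ((n : ℝ) - k) ^ 2
        + 2 * (r + 3)) • trPhi k n ^ (r + 4) := by
  have h₁ := trPhi_pow_mul_trPhi2 (k := k) (n := n) (r := r + 2) (by lia)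
  have h₂ := trPhi_pow_mul_trPhi2_sq hr
  have h₃ := trPhi_pow_mul_trace_Φ_cube (k := k) (n := n) (r := r + 1) (by lia)
  have hexpand : trPhi k n ^ r * (trPhi k n ^ 2 - trPhi2 k n) ^ 2 =
      trPhi k n ^ (r + 4) - (2 : ℝ) • (trPhi k n ^ (r + 2) * trPhi2 k n)
        + trPhi k n ^ r * trPhi2 k n ^ 2 := by
    have hcomm : Commute (trPhi k n ^ 2) (trPhi2 k n) :=
      (Subalgebra.mem_center_iff.mp (pow_mem (trPhi_mem_center k n) 2) _).symm
    rw [hcomm.sub_sq, two_smul, pow_add _ r 4, pow_add _ r 2]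
    noncomm_ring
  rw [add_assoc r 1 3, add_assoc r 1 1] at h₃
  rw [hexpand]
  linear_combination (norm := module)
    (((r : ℝ) + 2) * (r + 3)) • h₂ - (2 * ((r : ℝ) + 3)) • h₃ +
      (r * ((n : ℝ) - k) - 2 * (r + 1) * (r + 2)) • h₁

theorem T_eq_prod_flatten : T k n = (((List.finRange n).map fun s =>
    (List.finRange k).map fun j => ψ k n s j * ψb k n s j).flatten).prod := by
  rw [List.prod_flatten, List.map_map]
  rfl

theorem trPhi_pow_eq_factorial_smul_T : trPhi k n ^ (k * n) = (k * n).factorial • T k n := by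
  set l := ((List.finRange n).map fun s =>
    (List.finRange k).map fun j => ψ k n s j * ψb k n s j).flatten with hl
  have hmem {a} (ha : a ∈ l) : ∃ s j, ψ k n s j * ψb k n s j = a := by
    simpa [hl] using ha
  have hcomm : l.Pairwise Commute := by
    refine List.pairwise_of_forall_mem_list fun a ha x _ => ?_
    obtain ⟨s, j, rfl⟩ := hmem ha
    exact (Subalgebra.mem_center_iff.mp (ι_mul_ι_mem_center _ _) x).symm
  have hsq : ∀ a ∈ l, a * a = 0 := by
    intro a ha
    obtain ⟨s, j, rfl⟩ := hmem ha
    exact ι_mul_ι_mul_self _ _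
  have hsum : l.sum = trPhi k n := by
    simp only [hl, List.sum_flatten, trPhi, ω]
    rw [sum_comm]
    simp [Fin.sum_univ_def, Function.comp_def]
  have hlength : l.length = k * n := by
    simp [hl, List.length_flatten, Function.comp_def, mul_comm]
  rw [T_eq_prod_flatten, ← hlength, ← list_sum_pow_length hcomm hsq, hsum]

end Fermions

/-- `(tr Φ)^{kn−4} ∧ ((tr Φ)² − tr(Φ²))²
  = (kn−4)! · n(n+1)k(k−1) · [k(k−1)n(n−1) + 2(k−2)(k−3)n + 4(k−2)(n−1)] · T`. -/
theorem tau2_sq_eval (k N n : ℕ) (hk : 1 ≤ k) (hN : k < N) (hn : n = N - k)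
    (hkn : 4 ≤ k * n) :
    (trPhi k n) ^ (k * n - 4) * ((trPhi k n) ^ 2 - trPhi2 k n) ^ 2 =
      (((k * n - 4).factorial : ℝ) * (n : ℝ) * ((n : ℝ) + 1) * (k : ℝ) * ((k : ℝ) - 1) *
        ((k : ℝ) * ((k : ℝ) - 1) * (n : ℝ) * ((n : ℝ) - 1)
          + 2 * ((k : ℝ) - 2) * ((k : ℝ) - 3) * (n : ℝ)
          + 4 * ((k : ℝ) - 2) * ((n : ℝ) - 1))) • T k n := by
  obtain ⟨r, hr⟩ := Nat.exists_eq_add_of_le' hkn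
  have hr' : (r : ℝ) = k * n - 4 := by
    rw [eq_sub_iff_add_eq]
    exact_mod_cast hr.symm
  have hne : ((r : ℝ) + 1) * (r + 2) * (r + 3) ≠ 0 := by positivity
  have hfactorial : ((k * n).factorial : ℝ) =
      (k * n) * ((r + 3) * (r + 2) * (r + 1)) * r.factorial := by
    rw [hr]
    push_cast [Nat.factorial_succ]
    rw [hr']
    ring
  rw [hr, Nat.add_sub_cancel]
  refine (smul_right_inj hne).mp ?_
  rw [trPhi_pow_mul_sub_trPhi2_sq hr.le, ← hr, trPhi_pow_eq_factorial_smul_T,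
    ← Nat.cast_smul_eq_nsmul ℝ, smul_smul, smul_smul, hfactorial]
  congr 1
  rw [hr']
  ring
end
end

section
/- Let k, N be natural numbers with 1 ≤ k < N, n := N − k, and assume kn ≥ 4. Then in Λ(V): Σ_{a ≠ b} Σ_{i ≠ j} (tr Φ)^{kn−4} ∧ ω^{ab} ∧ ω^{ba} ∧ ω^{ij} ∧ ω^{ji} = (kn−4)! · k · n · [4(k−1)²(n−1) + (k−1)(k−2)(k−3)n] · T, where both sums are over ordered pairs of distinct indices in {1, …, k}. (This is the evaluation of Q₃ = Σ_{a≠b} Σ_{i≠j} ∫Dψ (tr Φ)^{kN−k²−4} ω^{ab} ω^{ba} ω^{ij} ω^{ji}.) -/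
noncomputable section

/-!
The products `Y p q = ψ_p ψ̄_q` commute, vanish when a row or a column index repeats, and change
sign when two column indices are exchanged. Hence, if the `qᵢ` permute the distinct `pᵢ`, then
`∏ᵢ Y (pᵢ) (qᵢ)` is the product of the `Y (pᵢ) (pᵢ)` up to the sign of the permutation. Multiplied
by the power of `tr Y` that fills up the remaining degree, it gives Wick's formula
`(tr Y)^(N - m) ∏ᵢ Y (pᵢ) (qᵢ) = (N - m)! · det (δ_{pᵢ qⱼ}) · ∏ᵣ Y r r`.

An index is a pair of a flavour `s` and a colour `j`, and `ω^{ij}` is `Y` summed over the flavour.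
For the colours `(a, b, i, j)` and `(b, a, j, i)` only derangements of the four factors contribute
to the determinant, and the flavour sum attaches a factor `n` to each of their cycles: the double
transpositions give `n²`, the four-cycles `-n`. What remains is to count the colours that match.
-/

section

open Finset Matrix

universe u

section CommRing

variable {R ι : Type*} [CommRing R]

theorem prod_eq_zero_of_mul_eq_zero [Fintype ι] {f : ι → R} {i j : ι} (hij : i ≠ j)
    (h : f i * f j = 0) : ∏ x, f x = 0 := by
  classical
  simpa [prod_pair hij, h] using prod_dvd_prod_of_subset {i, j} univ f (subset_univ _)

theorem add_pow_mul_of_mul_eq_zero {a b c : R} (h : a * c = 0) (m : ℕ) :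
    (a + b) ^ m * c = b ^ m * c := by
  obtain ⟨d, hd⟩ := sub_dvd_pow_sub_pow (a + b) b m
  linear_combination hd * c + d * h

theorem sum_pow_eq_factorial_mul_sum_powersetCard {x : ι → R}
    (hx : ∀ i, x i * x i = 0) (B : Finset ι) (m : ℕ) :
    (∑ i ∈ B, x i) ^ m = (m.factorial : R) * ∑ S ∈ B.powersetCard m, ∏ i ∈ S, x i := by
  classical
  induction B using Finset.induction_on generalizing m with
  | empty =>
    cases m with
    | zero => simp
    | succ m => rw [powersetCard_eq_empty.2 (by simp)]; simp
  | insert a B ha ih =>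
    cases m with
    | zero => simp
    | succ m =>
      have hnotMem : ∀ S ∈ B.powersetCard m, a ∉ S := fun S hS haS =>
        ha ((mem_powersetCard.1 hS).1 haS)
      have hdisj : Disjoint (B.powersetCard (m + 1)) ((B.powersetCard m).image (insert a)) := by
        rw [disjoint_left]
        rintro S hS hS'
        obtain ⟨S', -, rfl⟩ := mem_image.1 hS'
        exact ha ((mem_powersetCard.1 hS).1 (mem_insert_self _ _))
      have hinj : Set.InjOn (insert a) (B.powersetCard m : Set (Finset ι)) := by
        intro S hS S' hS' h
        rw [← erase_insert (hnotMem S hS), h, erase_insert (hnotMem S' hS')]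
      have hstep : (∑ i ∈ insert a B, x i) ^ (m + 1) =
          (∑ i ∈ B, x i) ^ (m + 1) + (m + 1) * (∑ i ∈ B, x i) ^ m * x a := by
        have := Polynomial.eval_add_of_sq_eq_zero (.X ^ (m + 1)) (∑ i ∈ B, x i) (x a)
          (by rw [sq, hx])
        rw [sum_insert ha, add_comm (x a)]
        simpa using this
      rw [hstep, ih, ih, powersetCard_succ_insert ha, sum_union hdisj, sum_image hinj,
        sum_congr rfl fun S hS => prod_insert (hnotMem S hS), ← mul_sum, Nat.factorial_succ]
      push_cast
      ring

end CommRing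

theorem sum_sum_offDiag {ι M : Type*} [Fintype ι] [DecidableEq ι] [AddCommGroup M]
    (f : ι → ι → M) :
    ∑ i, ∑ j, (if i = j then 0 else f i j) = ∑ i, ∑ j, f i j - ∑ i, f i i := by
  have h (i j : ι) : (if i = j then 0 else f i j) = f i j - if i = j then f i j else 0 := by
    split_ifs <;> simp
  simp [h]

/-- The relations satisfied by the products `Y p q = θ p * η q` of two families of mutually
anticommuting square-zero elements (fermions). `row_mul` and `col_mul` are separate fields because
`exchange` yields them only where `2` is not a zero divisor. -/
structure IsFermionBilinear {I J A : Type*} [Ring A] (Y : Matrix I J A) : Prop where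
  comm (p p' : I) (q q' : J) : Y p q * Y p' q' = Y p' q' * Y p q
  row_mul (p : I) (q q' : J) : Y p q * Y p q' = 0
  col_mul (p p' : I) (q : J) : Y p q * Y p' q = 0
  exchange (p p' : I) (q q' : J) : Y p q * Y p' q' = -(Y p q' * Y p' q)

/-- The partial trace of a matrix over the first factor of its index set. Summing over the flavour
`s` in this way turns the matrix of the `ψ_s^i ψ̄_t^j` into the `k × k` matrix `Φ = (ω^{ij})`. -/
def partialTrace {σ κ A : Type*} [Fintype σ] [AddCommMonoid A] (Y : Matrix (σ × κ) (σ × κ) A) :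
    Matrix κ κ A :=
  of fun a b => ∑ s, Y (s, a) (s, b)

theorem trace_partialTrace {σ κ A : Type*} [Fintype σ] [Fintype κ] [AddCommMonoid A]
    (Y : Matrix (σ × κ) (σ × κ) A) : (partialTrace Y).trace = Y.trace :=
  (Fintype.sum_prod_type_right fun r => Y r r).symm

theorem partialTrace_map {σ κ A B F : Type*} [Fintype σ] [AddCommMonoid A] [AddCommMonoid B]
    [FunLike F A B] [AddMonoidHomClass F A B] (f : F) (Y : Matrix (σ × κ) (σ × κ) A) :
    partialTrace (Y.map f) = (partialTrace Y).map f := by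
  ext a b
  simp [partialTrace]

namespace IsFermionBilinear

section Wick

variable {R I L J : Type*} [CommRing R] [Fintype J]

theorem prod_comp_swap [DecidableEq J] {Y : Matrix I L R} (hY : IsFermionBilinear Y) (p : J → I)
    (q : J → L) {a b : J} (hab : a ≠ b) :
    ∏ i, Y (p i) (q (Equiv.swap a b i)) = -∏ i, Y (p i) (q i) := by
  rw [← prod_mul_prod_compl {a, b}, ← prod_mul_prod_compl {a, b} fun i => Y (p i) (q i),
    prod_pair hab, prod_pair hab, Equiv.swap_apply_left, Equiv.swap_apply_right, hY.exchange,
    neg_mul]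
  congr 2
  refine prod_congr rfl fun i hi => ?_
  simp only [mem_compl, mem_insert, mem_singleton, not_or] at hi
  rw [Equiv.swap_apply_of_ne_of_ne hi.1 hi.2]

theorem prod_comp_perm [DecidableEq J] {Y : Matrix I L R} (hY : IsFermionBilinear Y) (p : J → I)
    (q : J → L) (τ : Equiv.Perm J) :
    ∏ i, Y (p i) (q (τ i)) = (τ.sign : ℤ) * ∏ i, Y (p i) (q i) := by
  induction τ using Equiv.Perm.swap_induction_on generalizing q with
  | one => simp
  | swap_mul τ a b hab ih =>
    have h := ih (q ∘ Equiv.swap a b)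
    simp only [Function.comp_apply, hY.prod_comp_swap p q hab] at h
    simpa [Equiv.Perm.sign_swap hab] using h

variable [Fintype I] {Y : Matrix I I R}

theorem trace_pow_mul_prod [DecidableEq I] (hY : IsFermionBilinear Y) (p q : J → I) (m : ℕ) :
    Y.trace ^ m * ∏ i, Y (p i) (q i) =
      (m.factorial : R) * (∑ S ∈ (univ.image p ∪ univ.image q)ᶜ.powersetCard m, ∏ r ∈ S, Y r r) *
        ∏ i, Y (p i) (q i) := by
  set A := univ.image p ∪ univ.image q
  have hkill : ∀ r ∈ A, Y r r * ∏ i, Y (p i) (q i) = 0 := by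
    intro r hr
    have hfactor : ∃ i, Y r r * Y (p i) (q i) = 0 := by
      rcases mem_union.1 hr with h | h <;> obtain ⟨i, -, rfl⟩ := mem_image.1 h
      exacts [⟨i, hY.row_mul _ _ _⟩, ⟨i, hY.col_mul _ _ _⟩]
    obtain ⟨i, hi⟩ := hfactor
    exact zero_dvd_iff.1 (hi ▸ mul_dvd_mul_left _ (dvd_prod_of_mem _ (mem_univ i)))
  have hA : (∑ r ∈ A, Y r r) * ∏ i, Y (p i) (q i) = 0 := by
    rw [sum_mul, sum_eq_zero hkill]
  have htrace : Y.trace = ∑ r ∈ A, Y r r + ∑ r ∈ Aᶜ, Y r r := (sum_add_sum_compl A _).symm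
  rw [htrace, add_pow_mul_of_mul_eq_zero hA,
    sum_pow_eq_factorial_mul_sum_powersetCard fun r => hY.row_mul r r r]

theorem trace_pow_mul_prod_comp_perm [DecidableEq J] (hY : IsFermionBilinear Y) {p : J → I}
    (hp : p.Injective) (τ : Equiv.Perm J) :
    Y.trace ^ (Fintype.card I - Fintype.card J) * ∏ i, Y (p i) (p (τ i)) =
      ((Fintype.card I - Fintype.card J).factorial : R) * (τ.sign : ℤ) * ∏ r, Y r r := by
  classical
  have hrange : univ.image p ∪ univ.image (p ∘ τ) = univ.image p := by
    rw [← image_image, image_univ_equiv, union_self]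
  have hcard : #(univ.image p)ᶜ = Fintype.card I - Fintype.card J := by
    rw [card_compl, card_image_of_injective _ hp, card_univ]
  have hsplit : ∏ r, Y r r = (∏ r ∈ (univ.image p)ᶜ, Y r r) * ∏ i, Y (p i) (p i) := by
    rw [← prod_compl_mul_prod (univ.image p), prod_image hp.injOn]
  have h := hY.trace_pow_mul_prod p (p ∘ τ) (Fintype.card I - Fintype.card J)
  rw [hrange, ← hcard, powersetCard_self, sum_singleton, hcard] at h
  simp only [Function.comp_apply] at h
  rw [h, hY.prod_comp_perm, hsplit]
  ring

theorem trace_pow_mul_prod_eq_zero (hY : IsFermionBilinear Y) {p q : J → I}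
    (hp : p.Injective) {j : J} (hj : q j ∉ Set.range p) :
    Y.trace ^ (Fintype.card I - Fintype.card J) * ∏ i, Y (p i) (q i) = 0 := by
  classical
  have hlt : Fintype.card J < #(univ.image p ∪ univ.image q) := by
    rw [← card_univ, ← card_image_of_injective _ hp]
    exact card_lt_card <| (ssubset_iff_of_subset subset_union_left).2
      ⟨q j, by simp, by simpa using hj⟩
  have hle : #(univ.image p ∪ univ.image q) ≤ Fintype.card I := card_le_univ _
  rw [hY.trace_pow_mul_prod, powersetCard_eq_empty.2, sum_empty, mul_zero, zero_mul]
  rw [card_compl]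
  omega

theorem trace_pow_mul_prod_eq_det [DecidableEq I] [DecidableEq J] (hY : IsFermionBilinear Y)
    (p q : J → I) :
    Y.trace ^ (Fintype.card I - Fintype.card J) * ∏ i, Y (p i) (q i) =
      ((Fintype.card I - Fintype.card J).factorial : R) *
        ((1 : Matrix I I R).submatrix p q).det * ∏ r, Y r r := by
  by_cases hp : p.Injective
  swap
  · obtain ⟨i, j, hpij, hij⟩ : ∃ i j, p i = p j ∧ i ≠ j := by
      simpa [Function.Injective] using hp
    rw [prod_eq_zero_of_mul_eq_zero hij (hpij ▸ hY.row_mul _ _ _),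
      det_zero_of_row_eq hij (by ext; simp [one_apply, hpij])]
    simp
  by_cases hq : q.Injective
  swap
  · obtain ⟨i, j, hqij, hij⟩ : ∃ i j, q i = q j ∧ i ≠ j := by
      simpa [Function.Injective] using hq
    rw [prod_eq_zero_of_mul_eq_zero hij (hqij ▸ hY.col_mul _ _ _),
      det_zero_of_column_eq hij (by simp [one_apply, hqij])]
    simp
  by_cases hqp : ∀ j, q j ∈ Set.range p
  · choose f hf using hqp
    obtain rfl : p ∘ f = q := funext hf
    let τ : Equiv.Perm J := .ofBijective f (Finite.injective_iff_bijective.1 (hq.of_comp))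
    have hdet : ((1 : Matrix I I R).submatrix p (p ∘ f)).det = (τ.sign : ℤ) := by
      have := det_permute' τ ((1 : Matrix I I R).submatrix p p)
      rwa [submatrix_one _ hp, det_one, mul_one, ← submatrix_one _ hp] at this
    rw [hdet]
    exact hY.trace_pow_mul_prod_comp_perm hp τ
  · push Not at hqp
    obtain ⟨j, hj⟩ := hqp
    rw [hY.trace_pow_mul_prod_eq_zero hp hj, det_eq_zero_of_column_eq_zero j, mul_zero, zero_mul]
    exact fun i => one_apply_ne fun h => hj ⟨i, h⟩

end Wick

section PartialTrace

variable {R σ κ J : Type*} [CommRing R] [Fintype σ] [Fintype κ] [Fintype J] [DecidableEq σ]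
  [DecidableEq κ] [DecidableEq J] {Y : Matrix (σ × κ) (σ × κ) R}

theorem trace_pow_mul_prod_partialTrace (hY : IsFermionBilinear Y) (a b : J → κ) :
    (partialTrace Y).trace ^ (Fintype.card (σ × κ) - Fintype.card J) *
        ∏ i, partialTrace Y (a i) (b i) =
      ((Fintype.card (σ × κ) - Fintype.card J).factorial : R) *
        (∑ s : J → σ, ((1 : Matrix (σ × κ) (σ × κ) R).submatrix
          (fun i => (s i, a i)) (fun i => (s i, b i))).det) * ∏ r, Y r r := by
  have hexpand : ∏ i, partialTrace Y (a i) (b i) =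
      ∑ s : J → σ, ∏ i, Y (s i, a i) (s i, b i) := Fintype.prod_sum _
  rw [trace_partialTrace, hexpand, mul_sum, mul_sum, sum_mul]
  exact sum_congr rfl fun s _ => hY.trace_pow_mul_prod_eq_det _ _

end PartialTrace

end IsFermionBilinear

theorem det_fin_four_of_diag_eq_zero {R : Type*} [CommRing R] (M : Matrix (Fin 4) (Fin 4) R)
    (h : ∀ i, M i i = 0) :
    M.det = M 0 1 * M 1 0 * M 2 3 * M 3 2 + M 0 2 * M 2 0 * M 1 3 * M 3 1
      + M 0 3 * M 3 0 * M 1 2 * M 2 1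
      - M 0 1 * M 1 2 * M 2 3 * M 3 0 - M 0 1 * M 1 3 * M 3 2 * M 2 0
      - M 0 2 * M 2 3 * M 3 1 * M 1 0 - M 0 3 * M 3 2 * M 2 1 * M 1 0
      - M 0 2 * M 2 1 * M 1 3 * M 3 0 - M 0 3 * M 3 1 * M 1 2 * M 2 0 := by
  simp only [det_succ_row_zero, Fin.sum_univ_succ, submatrix_apply]
  simp [Fin.succAbove, h]
  ring

theorem sum_pi_fin_four {σ M : Type*} [Fintype σ] [AddCommMonoid M] (f : (Fin 4 → σ) → M) :
    ∑ s, f s = ∑ s, ∑ t, ∑ u, ∑ v, f ![s, t, u, v] := by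
  simp only [← (Fin.consEquiv fun _ => σ).sum_comp, Fintype.sum_prod_type,
    univ_unique, sum_singleton]
  rfl

/-- The signed count of Wick contractions of `ω^{ab} ω^{ba} ω^{ij} ω^{ji}` for `a ≠ b` and `i ≠ j`:
a derangement of the four factors that matches their colours contributes its sign times `n` to the
number of its cycles, since the `n` flavours are constant along cycles. -/
def fourPointWeight {R κ : Type*} [CommRing R] [DecidableEq κ] (n : R) (a b i j : κ) : R :=
  n ^ 2 * (1 + (if a = j ∧ b = i then 1 else 0) + (if a = i ∧ b = j then 1 else 0))
    - n * ((if b = j then 1 else 0) + (if b = i then 1 else 0)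
      + (if a = j then 1 else 0) + (if a = i then 1 else 0))

section FourPoint

variable {R σ κ : Type*} [CommRing R] [DecidableEq σ] [DecidableEq κ]

theorem det_one_submatrix_swap_pairs {a b i j : κ} (hab : a ≠ b) (hij : i ≠ j) (s t u v : σ) :
    ((1 : Matrix (σ × κ) (σ × κ) R).submatrix
        ![(s, a), (t, b), (u, i), (v, j)] ![(s, b), (t, a), (u, j), (v, i)]).det =
      (if s = t ∧ u = v then 1 else 0)
        + (if s = u ∧ t = v then 1 else 0) * (if a = j ∧ b = i then 1 else 0)
        + (if s = v ∧ t = u then 1 else 0) * (if a = i ∧ b = j then 1 else 0)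
        - (if s = t ∧ t = u ∧ u = v then 1 else 0) *
          ((if b = j then 1 else 0) + (if b = i then 1 else 0)
            + (if a = j then 1 else 0) + (if a = i then 1 else 0)) := by
  rw [det_fin_four_of_diag_eq_zero _ <| by
    simp [Fin.forall_fin_succ, one_apply, hab, hab.symm, hij, hij.symm]]
  simp only [submatrix_apply, one_apply, Matrix.cons_val, Prod.mk.injEq, ite_zero_mul_ite_zero,
    mul_one]
  -- The four-cycles `0 → 2 → 1 → 3` and `0 → 3 → 1 → 2` would match the colours only if `i = j`.
  grind

theorem sum_det_one_submatrix_swap_pairs [Fintype σ] {a b i j : κ} (hab : a ≠ b) (hij : i ≠ j) :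
    ∑ s : Fin 4 → σ, ((1 : Matrix (σ × κ) (σ × κ) R).submatrix
        (fun x => (s x, ![a, b, i, j] x)) (fun x => (s x, ![b, a, j, i] x))).det =
      fourPointWeight (Fintype.card σ : R) a b i j := by
  have hpair (s t u v : σ) (c : Fin 4 → κ) : (fun x => (![s, t, u, v] x, c x)) =
      ![(s, c 0), (t, c 1), (u, c 2), (v, c 3)] := by
    ext x : 1
    fin_cases x <;> rfl
  simp only [sum_pi_fin_four, hpair, Matrix.cons_val, det_one_submatrix_swap_pairs hab hij]
  simp [fourPointWeight, ite_and, sum_add_distrib, mul_add, sq]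

variable [Fintype κ]

theorem sum_fourPointWeight_of_ne (n : R) {a b : κ} (hab : a ≠ b) :
    ∑ i, ∑ j, (if i = j then 0 else fourPointWeight n a b i j) =
      n ^ 2 * (Fintype.card κ * (Fintype.card κ - 1) + 2) - 4 * n * (Fintype.card κ - 1) := by
  rw [sum_sum_offDiag]
  simp [fourPointWeight, ite_and, sum_add_distrib, ← mul_sum, hab.symm]
  ring

theorem sum_fourPointWeight (n : R) :
    ∑ a : κ, ∑ b, ∑ i, ∑ j, (if a = b ∨ i = j then 0 else fourPointWeight n a b i j) =
      Fintype.card κ * n * (4 * (Fintype.card κ - 1) ^ 2 * (n - 1)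
        + (Fintype.card κ - 1) * (Fintype.card κ - 2) * (Fintype.card κ - 3) * n) := by
  have hinner (a b : κ) :
      ∑ i, ∑ j, (if a = b ∨ i = j then 0 else fourPointWeight n a b i j) =
        if a = b then 0 else
          n ^ 2 * (Fintype.card κ * (Fintype.card κ - 1) + 2) - 4 * n * (Fintype.card κ - 1) := by
    split_ifs with hab
    · simp [hab]
    · simpa only [hab, false_or] using sum_fourPointWeight_of_ne n hab
  simp only [hinner, sum_sum_offDiag, sum_const, card_univ, nsmul_eq_mul]
  ring

end FourPoint

namespace IsFermionBilinear

section FourPoint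

variable {R σ κ : Type*} [CommRing R] [Fintype σ] [Fintype κ] [DecidableEq κ]
  {Y : Matrix (σ × κ) (σ × κ) R}

theorem trace_pow_mul_partialTrace_swap_pairs (hY : IsFermionBilinear Y) {a b i j : κ}
    (hab : a ≠ b) (hij : i ≠ j) :
    (partialTrace Y).trace ^ (Fintype.card κ * Fintype.card σ - 4) * partialTrace Y a b *
        partialTrace Y b a * partialTrace Y i j * partialTrace Y j i =
      ((Fintype.card κ * Fintype.card σ - 4).factorial : R) *
        fourPointWeight (Fintype.card σ : R) a b i j * ∏ r, Y r r := by
  classical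
  have hwick := hY.trace_pow_mul_prod_partialTrace ![a, b, i, j] ![b, a, j, i]
  rw [sum_det_one_submatrix_swap_pairs hab hij, Fintype.card_prod, Fintype.card_fin,
    mul_comm (Fintype.card σ)] at hwick
  simpa only [Fin.prod_univ_four, Matrix.cons_val, mul_assoc] using hwick

theorem sum_trace_pow_mul_partialTrace (hY : IsFermionBilinear Y) :
    ∑ a, ∑ b, ∑ i, ∑ j, (if a = b ∨ i = j then 0 else
        (partialTrace Y).trace ^ (Fintype.card κ * Fintype.card σ - 4) * partialTrace Y a b *
          partialTrace Y b a * partialTrace Y i j * partialTrace Y j i) =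
      ((Fintype.card κ * Fintype.card σ - 4).factorial : R) *
        (Fintype.card κ * Fintype.card σ *
          (4 * ((Fintype.card κ : R) - 1) ^ 2 * (Fintype.card σ - 1)
            + (Fintype.card κ - 1) * (Fintype.card κ - 2) * (Fintype.card κ - 3) *
              Fintype.card σ)) *
        ∏ r, Y r r := by
  rw [← sum_fourPointWeight]
  simp only [mul_sum, sum_mul, mul_ite, ite_mul, mul_zero, zero_mul]
  refine sum_congr rfl fun a _ => sum_congr rfl fun b _ => sum_congr rfl fun i _ =>
    sum_congr rfl fun j _ => ite_congr rfl (fun _ => rfl) fun h => ?_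
  push Not at h
  exact hY.trace_pow_mul_partialTrace_swap_pairs h.1 h.2

end FourPoint

open scoped IsMulCommutative in
theorem exists_commRing_lift {I J : Type*} {A : Type u} [Ring A] {Y : Matrix I J A}
    (hY : IsFermionBilinear Y) :
    ∃ (R : Type u) (_ : CommRing R) (f : R →+* A) (Z : Matrix I J R),
      IsFermionBilinear Z ∧ Z.map f = Y := by
  let S : Set A := Set.range fun r : I × J => Y r.1 r.2
  have hcomm : ∀ x ∈ S, ∀ y ∈ S, x * y = y * x := by
    rintro _ ⟨r, rfl⟩ _ ⟨r', rfl⟩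
    exact hY.comm _ _ _ _
  let Z : Matrix I J (Subring.closure S) :=
    of fun p q => ⟨Y p q, Subring.subset_closure ⟨(p, q), rfl⟩⟩
  have := Subring.isMulCommutative_closure hcomm
  refine ⟨Subring.closure S, inferInstance, (Subring.closure S).subtype, Z,
    ⟨?_, ?_, ?_, ?_⟩, rfl⟩
  · exact fun p p' q q' => Subtype.ext (hY.comm p p' q q')
  · exact fun p q q' => Subtype.ext (hY.row_mul p q q')
  · exact fun p p' q => Subtype.ext (hY.col_mul p p' q)
  · exact fun p p' q q' => Subtype.ext (hY.exchange p p' q q')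

open ExteriorAlgebra in
theorem ι_mul_ι {R M I J : Type*} [CommRing R] [AddCommGroup M] [Module R M]
    (u : I → M) (v : J → M) : IsFermionBilinear (of fun p q => ι R (u p) * ι R (v q)) := by
  have hanti (x y : M) : ι R x * ι R y = -(ι R y * ι R x) :=
    eq_neg_of_add_eq_zero_left (ι_add_mul_swap x y)
  have hmid (x y z w : M) : ι R x * ι R y * (ι R z * ι R w) =
      -(ι R x * ι R z * (ι R y * ι R w)) := by
    rw [mul_assoc, ← mul_assoc (ι R y), hanti y z]
    noncomm_ring
  have hexchange (x y z w : M) : ι R x * ι R y * (ι R z * ι R w) =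
      -(ι R x * ι R w * (ι R z * ι R y)) := by
    rw [hmid, hmid x w, hanti w y, mul_neg, neg_neg]
  constructor
  · intro p p' q q'
    simp only [of_apply]
    rw [hexchange, hmid, hanti (u p) (u p'), neg_mul, ← hmid, neg_neg]
  · intro p q q'
    simp [hmid (u p)]
  · intro p p' q
    simp [hmid (u p)]
  · exact fun _ _ _ _ => hexchange _ _ _ _

end IsFermionBilinear

/-- The matrix of all products `ψ_s^i ψ̄_t^j`, indexed by the pairs of a flavour and a colour. -/
def fermionMatrix (k n : ℕ) :
    Matrix (Fin n × Fin k) (Fin n × Fin k) (ExteriorAlgebra ℝ (V k n)) :=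
  of fun p q => ψ k n p.1 p.2 * ψb k n q.1 q.2

theorem isFermionBilinear_fermionMatrix (k n : ℕ) : IsFermionBilinear (fermionMatrix k n) :=
  IsFermionBilinear.ι_mul_ι (R := ℝ) (fun p => (Pi.single (Sum.inl p) 1 : V k n))
    fun q => Pi.single (Sum.inr q) 1

theorem partialTrace_fermionMatrix (k n : ℕ) : partialTrace (fermionMatrix k n) = of (ω k n) :=
  rfl

theorem trace_of_ω (k n : ℕ) : (of (ω k n)).trace = trPhi k n :=
  rfl

theorem list_prod_fermionMatrix_diag (k n : ℕ) :
    ((List.finRange n).map fun s =>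
      ((List.finRange k).map fun j => fermionMatrix k n (s, j) (s, j)).prod).prod = T k n :=
  rfl

theorem Q3_eval_general {A : Type*} [Ring A] {k n : ℕ}
    {Y : Matrix (Fin n × Fin k) (Fin n × Fin k) A} (hY : IsFermionBilinear Y) :
    (∑ a, ∑ b, ∑ i, ∑ j, if a = b ∨ i = j then 0 else
        (partialTrace Y).trace ^ (k * n - 4) * partialTrace Y a b * partialTrace Y b a *
          partialTrace Y i j * partialTrace Y j i) =
      (((k * n - 4).factorial : A) * (k : A) * (n : A) *
        (4 * ((k : A) - 1) ^ 2 * ((n : A) - 1)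
          + ((k : A) - 1) * ((k : A) - 2) * ((k : A) - 3) * (n : A))) *
        ((List.finRange n).map fun s =>
          ((List.finRange k).map fun j => Y (s, j) (s, j)).prod).prod := by
  obtain ⟨R, _, f, Z, hZ, rfl⟩ := hY.exists_commRing_lift
  have h := congrArg f hZ.sum_trace_pow_mul_partialTrace
  simp only [Fintype.card_fin, Fintype.prod_prod_type, Fin.prod_univ_def, map_sum, map_mul] at h
  have htrace : ((partialTrace Z).map f).trace = f (partialTrace Z).trace :=
    (AddMonoidHom.map_trace (f : R →+ A) _).symm
  simpa [map_ofNat, partialTrace_map, htrace, apply_ite f, map_list_prod, Function.comp_def,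
    mul_assoc] using h

end

/-- `∑_{a≠b} ∑_{i≠j} (tr Φ)^{kn−4} ∧ ω^{ab} ∧ ω^{ba} ∧ ω^{ij} ∧ ω^{ji}
  = (kn−4)! · k · n · [4(k−1)²(n−1) + (k−1)(k−2)(k−3)n] · T` (the term `Q₃`). -/
theorem Q3_eval (k N n : ℕ) (hk : 1 ≤ k) (hN : k < N) (hn : n = N - k)
    (hkn : 4 ≤ k * n) :
    (∑ a : Fin k, ∑ b : Fin k, ∑ i : Fin k, ∑ j : Fin k,
        if a = b ∨ i = j then 0 else
          (trPhi k n) ^ (k * n - 4) * ω k n a b * ω k n b a * ω k n i j * ω k n j i) =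
      (((k * n - 4).factorial : ℝ) * (k : ℝ) * (n : ℝ) *
        (4 * ((k : ℝ) - 1) ^ 2 * ((n : ℝ) - 1)
          + ((k : ℝ) - 1) * ((k : ℝ) - 2) * ((k : ℝ) - 3) * (n : ℝ))) • T k n := by
  simpa only [partialTrace_fermionMatrix, trace_of_ω, list_prod_fermionMatrix_diag, Matrix.of_apply,
    Algebra.smul_def, map_mul, map_add, map_sub, map_pow, map_natCast, map_one, map_ofNat]
    using Q3_eval_general (isFermionBilinear_fermionMatrix k n)
end
end
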